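/- Let m_1, m_2, …, m_r be positive integers (not necessarily distinct), each greater than 1, with m_1 + m_2 + ⋯ + m_r ≤ n. Then the quotient group VL_n/PVL_n' contains infinitely many elements of order lcm(m_1, m_2, …, m_r); moreover, there exists an element of VL_n/PVL_n' of order lcm(m_1, …, m_r) whose image in S_n under the map induced by π is a permutation of cycle type (m_1, m_2, …, m_r). -/

import Mathlib

open FreeGroup

/-- Generators of the virtual triplet group `VL n`: `Sum.inl i` is `y_{i+1}`,
`Sum.inr i` is `ρ_{i+1}`. -/
abbrev VLGen (n : ℕ) := Fin (n - 1) ⊕ Fin (n - 1)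

def fY {n : ℕ} (i : Fin (n - 1)) : FreeGroup (VLGen n) := FreeGroup.of (Sum.inl i)
def fP {n : ℕ} (i : Fin (n - 1)) : FreeGroup (VLGen n) := FreeGroup.of (Sum.inr i)

/-- Defining relators of the virtual triplet group `VL n` (indices are 0-based: index `i`
corresponds to the generator with subscript `i+1`). -/
def vlRels (n : ℕ) : Set (FreeGroup (VLGen n)) :=
  {r | (∃ i, r = fY i ^ 2) ∨ (∃ i, r = fP i ^ 2) ∨
    (∃ i j : Fin (n - 1), (i : ℕ) + 2 ≤ (j : ℕ) ∧ r = fP i * fP j * (fP i)⁻¹ * (fP j)⁻¹) ∨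
    (∃ i j : Fin (n - 1), ((i : ℕ) + 2 ≤ (j : ℕ) ∨ (j : ℕ) + 2 ≤ (i : ℕ)) ∧
      r = fY i * fP j * (fY i)⁻¹ * (fP j)⁻¹) ∨
    (∃ i j : Fin (n - 1), (j : ℕ) = (i : ℕ) + 1 ∧
      r = fY i * fY j * fY i * (fY j * fY i * fY j)⁻¹) ∨
    (∃ i j : Fin (n - 1), (j : ℕ) = (i : ℕ) + 1 ∧
      r = fP i * fP j * fP i * (fP j * fP i * fP j)⁻¹) ∨
    (∃ i j : Fin (n - 1), (j : ℕ) = (i : ℕ) + 1 ∧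
      r = fP i * fY j * fP i * (fP j * fY i * fP j)⁻¹)}

/-- The virtual triplet group `VL n`. -/
abbrev VL (n : ℕ) := PresentedGroup (vlRels n)

/-- The generator `y_{i+1}` of `VL n`. -/
def yG {n : ℕ} (i : Fin (n - 1)) : VL n := PresentedGroup.of (Sum.inl i)
/-- The generator `ρ_{i+1}` of `VL n`. -/
def pG {n : ℕ} (i : Fin (n - 1)) : VL n := PresentedGroup.of (Sum.inr i)

/-!
Let `K = ker π`. The generators `ρ_i` satisfy the Coxeter relations of `S_n`, so a product of
cycles `ρ_a ρ_{a+1} ⋯ ρ_{a+m-2}` supported on disjoint blocks `[a, a + m)` of lengths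
`m₁, …, m_r` is an `x` with `x ^ lcm = 1` and `π x` of cycle type `(m₁, …, m_r)`. As `π` factors
through `VL n / K'`, the class of `x` has order exactly `lcm(m₁, …, m_r)`. The identity
`(ρ_a ⋯ ρ_{a+k-1}) ^ (k + 1) = 1` is derived directly from the relations (`cyc_pow_eq_one`), which
avoids needing that the Coxeter presentation defines `S_n`.

For infinitude, map `VL n` to the semidirect product `ℤ^(n × n) ⋊ S_n` by `ρ_i ↦ (0, s_i)` and
`y_i ↦ (e_{i,i+1} - e_{i+1,i}, s_i)` (`toAff`). The subgroup `K` lands in the abelian lattice, so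
`K'` is killed (`comm_le_ker`). With `v = e_{i,i+1} - e_{i+1,i}`, the image of `y_i ρ_i`, the
conjugates of `x` by `(y_i ρ_i) ^ k` all have the order of `x`, and their lattice components differ
by multiples of `v - (π x) v`. As `π x ≠ 1`, some `i` makes this vector nonzero, and the lattice is
torsion-free, so these conjugates are pairwise distinct modulo `K'` (`infinite_conj`).
-/

open Equiv SemidirectProduct

/-! ### The affine quotient -/


/-- The lattice `ℤ^(n × n)`, written multiplicatively. -/
abbrev RootLat (n : ℕ) := Fin n × Fin n → Multiplicative ℤ

/-- The semidirect product `ℤ^(n × n) ⋊ S_n`, with `S_n` permuting the coordinates. -/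
abbrev Aff (n : ℕ) := RootLat n ⋊[mulAutArrow] Perm (Fin n)

/-- The vector `e_{a,b} - e_{b,a}`. -/
def vec {n : ℕ} (a b : Fin n) : RootLat n :=
  Pi.mulSingle (a, b) (Multiplicative.ofAdd 1) * (Pi.mulSingle (b, a) (Multiplicative.ofAdd 1))⁻¹

lemma vec_swap {n : ℕ} (a b : Fin n) : vec b a = (vec a b)⁻¹ := by
  simp [vec]

lemma act_single {n : ℕ} (σ : Perm (Fin n)) (p : Fin n × Fin n) (z : Multiplicative ℤ) :
    mulAutArrow σ (Pi.mulSingle p z : RootLat n) = Pi.mulSingle (σ p.1, σ p.2) z := by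
  funext q
  change (Pi.mulSingle p z : RootLat n) (σ⁻¹ • q) = _
  have : σ⁻¹ • q = p ↔ q = (σ p.1, σ p.2) := by
    rw [inv_smul_eq_iff]; rfl
  simp only [Pi.mulSingle_apply, this]

lemma act_vec {n : ℕ} (σ : Perm (Fin n)) (a b : Fin n) :
    mulAutArrow σ (vec a b) = vec (σ a) (σ b) := by
  simp [vec, act_single]

lemma vec_inj {n : ℕ} {a b c d : Fin n} (hab : a ≠ b) (h : vec a b = vec c d) :
    a = c ∧ b = d := by
  have := congrFun h (a, b)
  have h2 : ((a, b) : Fin n × Fin n) ≠ (b, a) := fun e => hab (Prod.ext_iff.1 e).1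
  simp only [vec, Pi.mul_apply, Pi.inv_apply, Pi.mulSingle_apply, if_true, if_neg h2] at this
  by_contra hne
  have h3 : ((a, b) : Fin n × Fin n) ≠ (c, d) := fun e => hne (Prod.ext_iff.1 e)
  rw [if_neg h3] at this
  have := congrArg Multiplicative.toAdd this
  split_ifs at this <;> simp at this

/-- The image of `ρ` for the transposition `(a b)`. -/
def affP {n : ℕ} (a b : Fin n) : Aff n := ⟨1, swap a b⟩

/-- The image of `y` for the transposition `(a b)`. -/
def affY {n : ℕ} (a b : Fin n) : Aff n := ⟨vec a b, swap a b⟩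

lemma affP_sq {n : ℕ} (a b : Fin n) : affP a b ^ 2 = 1 := by
  rw [pow_two]; ext1 <;> simp [affP]

lemma affY_sq {n : ℕ} (a b : Fin n) : affY a b ^ 2 = 1 := by
  rw [pow_two]; ext1 <;> simp [affY, act_vec, vec_swap a b]

lemma swap_comm_far {n : ℕ} {a b c d : Fin n} (h : [a, b, c, d].Nodup) :
    swap a b * swap c d = swap c d * swap a b := 
  (Perm.disjoint_swap_swap h).commute

lemma affP_comm {n : ℕ} {a b c d : Fin n} (h : [a, b, c, d].Nodup) :
    affP a b * affP c d = affP c d * affP a b := by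
  ext1 <;> simp [affP, swap_comm_far h]

lemma affYP_comm {n : ℕ} {a b c d : Fin n} (h : [a, b, c, d].Nodup) :
    affY a b * affP c d = affP c d * affY a b := by
  have h' := h
  simp at h'
  ext1 <;> simp [affP, affY, swap_comm_far h, act_vec]
  rw [swap_apply_of_ne_of_ne (by grind) (by grind), swap_apply_of_ne_of_ne (by grind) (by grind)]

lemma swap_braid {n : ℕ} {a b c : Fin n} (hab : a ≠ b) (hbc : b ≠ c) (hac : a ≠ c) :
    swap a b * swap b c * swap a b = swap b c * swap a b * swap b c := by
  rw [swap_mul_swap_mul_swap hab hac, swap_comm a b, swap_comm b c, 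
    swap_mul_swap_mul_swap hbc.symm hac.symm, swap_comm]

lemma affP_braid {n : ℕ} {a b c : Fin n} (hab : a ≠ b) (hbc : b ≠ c) (hac : a ≠ c) :
    affP a b * affP b c * affP a b = affP b c * affP a b * affP b c := by
  ext1
  · simp [affP]
  · exact swap_braid hab hbc hac

lemma affY_braid {n : ℕ} {a b c : Fin n} (hab : a ≠ b) (hbc : b ≠ c) (hac : a ≠ c) :
    affY a b * affY b c * affY a b = affY b c * affY a b * affY b c := by
  ext1
  · simp [affY, act_vec, swap_apply_of_ne_of_ne, hab, hac, hbc.symm, hac.symm]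
    simp only [mul_comm, mul_left_comm]
  · exact swap_braid hab hbc hac

lemma affPY_braid {n : ℕ} {a b c : Fin n} (hab : a ≠ b) (hbc : b ≠ c) (hac : a ≠ c) :
    affP a b * affY b c * affP a b = affP b c * affY a b * affP b c := by
  ext1
  · simp [affP, affY, act_vec, swap_apply_of_ne_of_ne, hab, hac, hbc.symm, hac.symm]
  · exact swap_braid hab hbc hac

lemma conj_inl_left {n : ℕ} (v : RootLat n) (g : Aff n) :
    (inl v * g * (inl v)⁻¹).left = g.left * (v * (mulAutArrow g.right v)⁻¹) := by
  simp [mul_left_comm, mul_assoc]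

/-- The smaller of the two points exchanged by the transposition with index `i`. -/
abbrev lo {n : ℕ} (i : Fin (n - 1)) : Fin n := Fin.castLE (Nat.sub_le n 1) i

/-- The larger of the two points exchanged by the transposition with index `i`. -/
abbrev hi {n : ℕ} (i : Fin (n - 1)) : Fin n := ⟨(i : ℕ) + 1, by have := i.isLt; omega⟩

lemma far_nodup {n : ℕ} {i j : Fin (n - 1)} (h : (i : ℕ) + 2 ≤ j ∨ (j : ℕ) + 2 ≤ i) :
    [lo i, hi i, lo j, hi j].Nodup := by
  simp [Fin.ext_iff]; omega

/-- The images of the generators of `VL n` in `Aff n`. -/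
def affGen (n : ℕ) : VLGen n → Aff n :=
  Sum.elim (fun i => affY (lo i) (hi i)) (fun i => affP (lo i) (hi i))

lemma affGen_rels (n : ℕ) : ∀ r ∈ vlRels n, FreeGroup.lift (affGen n) r = 1 := by
  rintro r (⟨i, rfl⟩ | ⟨i, rfl⟩ | ⟨i, j, h, rfl⟩ | ⟨i, j, h, rfl⟩ | ⟨i, j, h, rfl⟩ | ⟨i, j, h, rfl⟩ |
    ⟨i, j, h, rfl⟩) <;>
    simp only [fY, fP, _root_.map_mul, _root_.map_inv, map_pow, lift_apply_of, affGen, Sum.elim_inl, Sum.elim_inr]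
  · exact affY_sq _ _
  · exact affP_sq _ _
  · rw [affP_comm (far_nodup (.inl h))]; group
  · rw [affYP_comm (far_nodup h)]; group
  all_goals
    have e : hi i = lo j := Fin.ext h.symm
    have h1 : lo i ≠ lo j := by simp [Fin.ext_iff]; omega
    have h2 : lo j ≠ hi j := by simp [Fin.ext_iff]
    have h3 : lo i ≠ hi j := by simp [Fin.ext_iff]; omega
    rw [e, mul_inv_eq_one]
  · exact affY_braid h1 h2 h3
  · exact affP_braid h1 h2 h3
  · exact affPY_braid h1 h2 h3

/-- The homomorphism `VL n → ℤ^(n × n) ⋊ S_n`. -/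
def toAff (n : ℕ) : VL n →* Aff n := PresentedGroup.toGroup (affGen_rels n)

lemma toAff_y {n : ℕ} (i : Fin (n - 1)) : toAff n (yG i) = affY (lo i) (hi i) :=
  PresentedGroup.toGroup.of _

lemma toAff_p {n : ℕ} (i : Fin (n - 1)) : toAff n (pG i) = affP (lo i) (hi i) :=
  PresentedGroup.toGroup.of _

section
variable {n : ℕ} (π : VL n →* Perm (Fin n))
    (hπy : ∀ i : Fin (n - 1), π (yG i) = swap (lo i) (hi i))
    (hπp : ∀ i : Fin (n - 1), π (pG i) = swap (lo i) (hi i))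
include hπy hπp

lemma toAff_right (x : VL n) : (toAff n x).right = π x := by
  have : rightHom.comp (toAff n) = π := by
    apply PresentedGroup.ext
    rintro (i | i)
    · exact (congrArg SemidirectProduct.right (toAff_y i)).trans (hπy i).symm
    · exact (congrArg SemidirectProduct.right (toAff_p i)).trans (hπp i).symm
  exact DFunLike.congr_fun this x

lemma comm_le_ker : ⁅π.ker, π.ker⁆ ≤ (toAff n).ker := by
  rw [Subgroup.commutator_le]
  intro g hg h hh
  have key : ∀ g ∈ π.ker, toAff n g = inl (toAff n g).left := fun g hg => by
    ext1
    · rfl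
    · rw [toAff_right π hπy hπp, right_inl]; exact hg
  rw [MonoidHom.mem_ker, map_commutatorElement, key g hg, key h hh, ← map_commutatorElement,
    commutatorElement_eq_one_iff_mul_comm.2 (mul_comm _ _), _root_.map_one]

/-- Conjugating `x` by powers of a suitable `y_i ρ_i` gives infinitely many classes. -/
lemma infinite_conj {x : VL n} (hx : π x ≠ 1) :
    {q : VL n ⧸ ⁅π.ker, π.ker⁆ | orderOf q =
      orderOf (QuotientGroup.mk x : VL n ⧸ ⁅π.ker, π.ker⁆)}.Infinite := by
  obtain ⟨i, hi'⟩ : ∃ i : Fin (n - 1), vec (π x (lo i)) (π x (hi i)) ≠ vec (lo i) (hi i) := by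
    -- If every `vec (lo i) (hi i)` is fixed, then `π x` fixes `lo i` and `hi i` for all `i`.
    by_contra! hcon
    apply hx
    have key : ∀ i : Fin (n - 1), lo i = π x (lo i) ∧ hi i = π x (hi i) := fun i =>
      vec_inj (by simp [Fin.ext_iff]) (hcon i).symm
    ext v
    by_cases hv : (v : ℕ) < n - 1
    · exact congrArg Fin.val (key ⟨v, hv⟩).1.symm
    · by_cases h0 : (v : ℕ) = 0
      · have := (π x v).isLt
        simp; omega
      · have := (key ⟨v - 1, by omega⟩).2
        have e : hi (⟨v - 1, by omega⟩ : Fin (n - 1)) = v := Fin.ext (by simp; omega)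
        rw [e] at this
        exact congrArg Fin.val this.symm
  set u : RootLat n := vec (lo i) (hi i) * (mulAutArrow (π x) (vec (lo i) (hi i)))⁻¹ with hu
  have hu1 : u ≠ 1 := by
    rw [hu, Ne, mul_inv_eq_one, act_vec]
    exact hi'.symm
  have hg : toAff n (yG i * pG i) = inl (vec (lo i) (hi i)) := by
    rw [_root_.map_mul, toAff_y, toAff_p]
    ext1 <;> simp [affY, affP]
  refine Set.infinite_of_injective_forall_mem (α := ℕ)
    (f := fun k => QuotientGroup.mk ((yG i * pG i) ^ k * x * ((yG i * pG i) ^ k)⁻¹)) ?_ ?_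
  · intro k l hkl
    have h1 : toAff n ((yG i * pG i) ^ k * x * ((yG i * pG i) ^ k)⁻¹) =
        toAff n ((yG i * pG i) ^ l * x * ((yG i * pG i) ^ l)⁻¹) := by
      rw [(toAff n).eq_iff]
      exact comm_le_ker π hπy hπp (QuotientGroup.eq.1 (Eq.symm hkl))
    have h2 : ∀ k : ℕ, (toAff n ((yG i * pG i) ^ k * x * ((yG i * pG i) ^ k)⁻¹)).left =
        (toAff n x).left * u ^ k := by
      intro k
      rw [_root_.map_mul, _root_.map_mul, _root_.map_inv, map_pow, hg, ← map_pow, conj_inl_left,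
        toAff_right π hπy hπp, map_pow, hu, mul_pow, inv_pow]
    have h3 := congrArg SemidirectProduct.left h1
    rw [h2, h2, mul_right_inj] at h3
    exact injective_pow_iff_not_isOfFinOrder.2 (not_isOfFinOrder_of_isMulTorsionFree hu1) h3
  · intro k
    change orderOf _ = orderOf _
    exact orderOf_injective (MulAut.conj (QuotientGroup.mk ((yG i * pG i) ^ k) :
      VL n ⧸ ⁅π.ker, π.ker⁆)).toMonoidHom (MulEquiv.injective _) (QuotientGroup.mk x)
end

/-! ### Cycles in groups satisfying the Coxeter relations -/

/-- The product `s 0 * s 1 * ⋯ * s (k - 1)`. -/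
def cyc {G : Type*} [Group G] (s : ℕ → G) : ℕ → G
  | 0 => 1
  | k + 1 => cyc s k * s k

/-- The decreasing product `s (a + j - 1) * ⋯ * s (a + 1) * s a`. -/
def desc {G : Type*} [Group G] (s : ℕ → G) (a : ℕ) : ℕ → G
  | 0 => 1
  | j + 1 => s (a + j) * desc s a j

section cyc
variable {G : Type*} [Group G] {s : ℕ → G}

lemma cyc_cons (s : ℕ → G) (k : ℕ) : cyc s (k + 1) = s 0 * cyc (fun i => s (i + 1)) k := by
  induction k with
  | zero => simp [cyc]
  | succ k ih => rw [cyc, ih, cyc, mul_assoc]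

lemma cyc_commute {k : ℕ} {x : G} (h : ∀ i < k, Commute (s i) x) : Commute (cyc s k) x := by
  induction k with
  | zero => exact Commute.one_left x
  | succ k ih => exact (ih fun i hi => h i (by omega)).mul_left (h k (by omega))

lemma map_cyc {H : Type*} [Group H] (f : G →* H) (k : ℕ) :
    f (cyc s k) = cyc (fun i => f (s i)) k := by
  induction k with
  | zero => simp [cyc]
  | succ k ih => simp [cyc, ih]

lemma cyc_congr {t : ℕ → G} {k : ℕ} (h : ∀ i < k, s i = t i) : cyc s k = cyc t k := by
  induction k with
  | zero => rfl
  | succ k ih => rw [cyc, cyc, ih fun i hi => h i (by omega), h k (by omega)]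

variable {N : ℕ} (hsq : ∀ i < N, s i * s i = 1)
    (hbr : ∀ i, i + 1 < N → s i * s (i + 1) * s i = s (i + 1) * s i * s (i + 1))
    (hcm : ∀ i j, i + 2 ≤ j → j < N → Commute (s i) (s j))

include hsq in
lemma desc_mul_cyc {k : ℕ} (hk : k ≤ N) : desc s 0 k * cyc s k = 1 := by
  rw [mul_eq_one_comm]
  induction k with
  | zero => simp [cyc, desc]
  | succ k ih =>
    rw [cyc, desc, zero_add, mul_assoc, ← mul_assoc (s k), hsq k (by omega), one_mul,
      ih (by omega)]

include hbr hcm in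
lemma cyc_shift {k i : ℕ} (hk : k ≤ N) (hi : i + 1 < k) :
    s (i + 1) * cyc s k = cyc s k * s i := by
  induction k with
  | zero => omega
  | succ k ih =>
    rcases Nat.lt_or_ge (i + 1) k with h | h
    · rw [cyc, ← mul_assoc, ih (by omega) h, mul_assoc, mul_assoc,
        (hcm i k (by omega) (by omega)).eq]
    · obtain rfl : k = i + 1 := by omega
      have hc : Commute (cyc s i) (s (i + 1)) :=
        cyc_commute fun j hj => hcm j (i + 1) (by omega) (by omega)
      rw [cyc, cyc]
      calc s (i + 1) * (cyc s i * s i * s (i + 1))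
          = (s (i + 1) * cyc s i) * s i * s (i + 1) := by simp only [mul_assoc]
        _ = cyc s i * (s (i + 1) * s i * s (i + 1)) := by rw [← hc.eq]; simp only [mul_assoc]
        _ = cyc s i * s i * s (i + 1) * s i := by rw [← hbr i (by omega)]; simp only [mul_assoc]

include hbr hcm in
lemma desc_shift {k a j : ℕ} (hk : k ≤ N) (hj : a + j < k) :
    desc s (a + 1) j * cyc s k = cyc s k * desc s a j := by
  induction j with
  | zero => simp [desc]
  | succ j ih =>
    rw [desc, desc, mul_assoc, ih (by omega), ← mul_assoc, ← mul_assoc,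
      show a + 1 + j = a + j + 1 by omega, cyc_shift hbr hcm hk (by omega)]

include hbr hcm in
/-- Each further factor `cyc s (K + 1)` moves left past the decreasing product, shifting its indices
down by one, and contributes a `cyc s K` and one more `s K`. -/
lemma cyc_pow {K j : ℕ} (hK : K + 1 ≤ N) (hj : j ≤ K + 1) :
    cyc s (K + 1) ^ j = cyc s K ^ j * desc s (K + 1 - j) j := by
  induction j with
  | zero => simp [desc]
  | succ j ih =>
    rw [pow_succ, ih (by omega), mul_assoc, show K + 1 - j = (K - j) + 1 by omega,
      desc_shift hbr hcm hK (by omega), pow_succ, show K + 1 - (j + 1) = K - j by omega, desc,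
      show K - j + j = K by omega, cyc]
    simp only [mul_assoc]

include hsq hbr hcm in
/-- At the exponent `K + 1` the decreasing product in `cyc_pow` is the inverse of `cyc s (K + 1)`, so
`cyc s (K + 1) ^ (K + 2) = cyc s K ^ (K + 1)`. -/
lemma cyc_pow_eq_one {k : ℕ} (hk : k ≤ N) : cyc s k ^ (k + 1) = 1 := by
  induction k with
  | zero => simp [cyc]
  | succ K ih =>
    rw [pow_succ, cyc_pow hbr hcm hk le_rfl, Nat.sub_self, mul_assoc, desc_mul_cyc hsq hk,
      mul_one, ih (by omega)]

end cyc

lemma formPerm_range' {α : Type*} [DecidableEq α] (f : ℕ → α) (a k : ℕ) :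
    ((List.range' a (k + 1)).map f).formPerm = cyc (fun i => swap (f (a + i)) (f (a + i + 1))) k := by
  induction k generalizing a with
  | zero => simp [cyc]
  | succ k ih =>
    have h := ih (a + 1)
    rw [List.range'_succ, List.map_cons] at h
    rw [List.range'_succ, List.range'_succ, List.map_cons, List.map_cons, List.formPerm_cons_cons,
      h, cyc_cons]
    simp only [add_zero, add_assoc, add_comm 1]

/-! ### Elements of prescribed cycle type -/

/-- The generators `ρ` of `VL n` as a sequence indexed by `ℕ` (constant `1` out of range). -/
def rho (n i : ℕ) : VL n := if h : i < n - 1 then pG ⟨i, h⟩ else 1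

lemma rho_sq {n i : ℕ} (h : i < n - 1) : rho n i * rho n i = 1 := by
  simp only [rho, dif_pos h, ← pow_two]
  exact PresentedGroup.one_of_mem (.inr (.inl ⟨⟨i, h⟩, rfl⟩))

lemma rho_braid {n i : ℕ} (h : i + 1 < n - 1) :
    rho n i * rho n (i + 1) * rho n i = rho n (i + 1) * rho n i * rho n (i + 1) := by
  have h' : i < n - 1 := by omega
  simp only [rho, dif_pos h, dif_pos h']
  exact PresentedGroup.mk_eq_mk_of_mul_inv_mem
    (.inr (.inr (.inr (.inr (.inr (.inl ⟨⟨i, h'⟩, ⟨i + 1, h⟩, rfl, rfl⟩))))))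

lemma rho_comm {n i j : ℕ} (hij : i + 2 ≤ j) (h : j < n - 1) : Commute (rho n i) (rho n j) := by
  have h' : i < n - 1 := by omega
  simp only [rho, dif_pos h, dif_pos h']
  have := PresentedGroup.one_of_mem (rels := vlRels n)
    (.inr (.inr (.inl ⟨⟨i, h'⟩, ⟨j, h⟩, hij, rfl⟩)))
  exact commutatorElement_eq_one_iff_commute.1 this

section blocks
variable {n : ℕ} (π : VL n →* Perm (Fin n))
    (hπp : ∀ i : Fin (n - 1), π (pG i) = swap (lo i) (hi i))
include hπp

/-- The product of the `m - 1` generators `ρ` starting at index `a` maps to an `m`-cycle on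
`[a, a + m)`. -/
lemma block [NeZero n] {a m : ℕ} (hm : 2 ≤ m) (ha : a + m ≤ n) :
    ((π (cyc (fun i => rho n (a + i)) (m - 1))).cycleType = {m}) ∧
    ∀ v : Fin n, (v : ℕ) < a ∨ a + m ≤ v → π (cyc (fun i => rho n (a + i)) (m - 1)) v = v := by
  set l := (List.range' a m).map (Fin.ofNat n) with hl
  have e : π (cyc (fun i => rho n (a + i)) (m - 1)) = l.formPerm := by
    rw [hl, show m = (m - 1) + 1 by omega, formPerm_range', map_cyc, Nat.add_sub_cancel]
    refine cyc_congr fun i hi' => ?_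
    have h : a + i < n - 1 := by omega
    simp only [rho, dif_pos h, hπp]
    congr 1 <;> simp only [Fin.ext_iff, Fin.ofNat, Fin.val_castLE] <;>
      exact (Nat.mod_eq_of_lt (by omega)).symm
  have hmem : ∀ v ∈ l, a ≤ (v : ℕ) ∧ (v : ℕ) < a + m := by
    intro v hv
    obtain ⟨i, hi', rfl⟩ := List.mem_map.1 hv
    rw [List.mem_range'_1] at hi'
    simp only [Fin.ofNat]
    rw [Nat.mod_eq_of_lt (by omega)]
    exact hi'
  have hnd : l.Nodup := by
    refine List.Nodup.map_on ?_ List.nodup_range'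
    intro i hi' j hj hij
    rw [List.mem_range'_1] at hi' hj
    have := congrArg Fin.val hij
    simp only [Fin.ofNat] at this
    rwa [Nat.mod_eq_of_lt (by omega), Nat.mod_eq_of_lt (by omega)] at this
  have hlen : l.length = m := by simp [hl]
  rw [e]
  constructor
  · rw [(List.isCycle_formPerm hnd (by omega)).cycleType,
      List.support_formPerm_of_nodup l hnd (by intro x hx; rw [hx, List.length_singleton] at hlen; omega),
      List.toFinset_card_of_nodup hnd, hlen]
  · intro v hv
    exact List.formPerm_apply_of_notMem fun h => by have := hmem v h; omega

/-- Induction over the blocks, placed consecutively from `a` on. Commutation with the generators of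
index below `a - 1`, and fixing the points below `a`, are what the next block needs. -/
lemma exists_blocks [NeZero n] (ms : List ℕ) (hms : ∀ m ∈ ms, 2 ≤ m) (a : ℕ)
    (ha : a + ms.sum ≤ n) :
    ∃ x : VL n, (∀ i, i + 2 ≤ a → Commute (rho n i) x) ∧
      (∀ L, (∀ m ∈ ms, m ∣ L) → x ^ L = 1) ∧
      (π x).cycleType = ms ∧ ∀ v : Fin n, (v : ℕ) < a → π x v = v := by
  induction ms generalizing a with
  | nil => exact ⟨1, fun _ _ => Commute.one_right _, by simp, by simp, by simp⟩
  | cons m ms ih =>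
    rw [List.sum_cons] at ha
    have hm : 2 ≤ m := hms m (by simp)
    obtain ⟨x, hx1, hx2, hx3, hx4⟩ := ih (fun k hk => hms k (by simp [hk])) (a + m) (by omega)
    obtain ⟨hc1, hc2⟩ := block π hπp hm (a := a) (by omega)
    have hcm : cyc (fun i => rho n (a + i)) (m - 1) ^ m = 1 := by
      have := cyc_pow_eq_one (s := fun i => rho n (a + i)) (N := m - 1) (k := m - 1)
        (fun i hi' => rho_sq (by omega)) (fun i hi' => rho_braid (i := a + i) (by omega))
        (fun i j hij hj => rho_comm (by omega) (by omega)) le_rfl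
      rwa [Nat.sub_add_cancel (by omega)] at this
    have hcc : ∀ i, i + 2 ≤ a → Commute (rho n i) (cyc (fun i => rho n (a + i)) (m - 1)) :=
      fun i hi' => (cyc_commute fun j hj => (rho_comm (by omega) (by omega)).symm).symm
    have hcx : Commute (cyc (fun i => rho n (a + i)) (m - 1)) x :=
      cyc_commute fun j hj => hx1 _ (by omega)
    generalize cyc (fun i => rho n (a + i)) (m - 1) = c at *
    refine ⟨c * x, fun i hi' => (hcc i hi').mul_right (hx1 i (by omega)), fun L hL => ?_, ?_, ?_⟩
    · obtain ⟨d, rfl⟩ := hL m (by simp)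
      rw [hcx.mul_pow, hx2 _ fun k hk => hL k (by simp [hk]), pow_mul, hcm, one_pow, one_mul]
    · have hd : Perm.Disjoint (π c) (π x) := fun v => by
        rcases Nat.lt_or_ge v (a + m) with h | h
        · exact .inr (hx4 v h)
        · exact .inl (hc2 v (.inr h))
      rw [_root_.map_mul, hd.cycleType_mul, hc1, hx3]
      rfl
    · intro v hv
      rw [_root_.map_mul, Perm.mul_apply, hx4 v (by omega), hc2 v (.inl hv)]

end blocks

/-- Let `π : VL n → S n` be the epimorphism sending both `yᵢ` and `ρᵢ`
to the transposition `(i, i+1)`, so `PVL n = ker π` and `PVL n' = ⁅ker π, ker π⁆`.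
Let `m₁, …, m_r` be integers, each at least `2`, with `m₁ + ⋯ + m_r ≤ n`.  Then
`VL n / PVL n'` contains infinitely many elements of order `lcm(m₁, …, m_r)`, and it
contains an element of this order whose image in `S n` has cycle type `(m₁, …, m_r)`. -/
theorem stmt19 (n r : ℕ) (hr : 1 ≤ r) (m : Fin r → ℕ) (hm : ∀ k, 2 ≤ m k)
    (hsum : (∑ k, m k) ≤ n)
    (π : VL n →* Equiv.Perm (Fin n))
    (hπy : ∀ i : Fin (n - 1), π (yG i) =
      Equiv.swap (Fin.castLE (Nat.sub_le n 1) i) ⟨(i : ℕ) + 1, by have := i.isLt; omega⟩)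
    (hπp : ∀ i : Fin (n - 1), π (pG i) =
      Equiv.swap (Fin.castLE (Nat.sub_le n 1) i) ⟨(i : ℕ) + 1, by have := i.isLt; omega⟩) :
    {q : VL n ⧸ ⁅π.ker, π.ker⁆ | orderOf q = Finset.univ.lcm m}.Infinite ∧
      ∃ x : VL n,
        orderOf (QuotientGroup.mk x : VL n ⧸ ⁅π.ker, π.ker⁆) = Finset.univ.lcm m ∧
        (π x).cycleType = Multiset.map m Finset.univ.val := by

  have hn : NeZero n := ⟨by
    have h1 := hm ⟨0, hr⟩
    have h2 := Finset.single_le_sum (f := m) (fun _ _ => Nat.zero_le _) (Finset.mem_univ ⟨0, hr⟩)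
    omega⟩
  obtain ⟨x, -, hx2, hx3, -⟩ := exists_blocks π hπp (List.ofFn m)
    (by simpa [List.mem_ofFn] using hm) 0 (by simpa [List.sum_ofFn] using hsum)
  have hct : (π x).cycleType = Multiset.map m Finset.univ.val := by
    rw [hx3, List.ofFn_eq_map]
    rfl
  have hker : ⁅π.ker, π.ker⁆ ≤ π.ker := Subgroup.commutator_le_left _ _
  have hord : orderOf (QuotientGroup.mk x : VL n ⧸ ⁅π.ker, π.ker⁆) = Finset.univ.lcm m := by
    apply Nat.dvd_antisymm
    · rw [orderOf_dvd_iff_pow_eq_one, ← QuotientGroup.mk_pow, hx2, QuotientGroup.mk_one]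
      simpa [List.mem_ofFn] using fun k => Finset.dvd_lcm (Finset.mem_univ k)
    · have : Finset.univ.lcm m = orderOf (π x) := by
        rw [← Perm.lcm_cycleType, hct]
        rfl
      rw [this, orderOf_dvd_iff_pow_eq_one, ← map_pow]
      exact hker ((QuotientGroup.eq_one_iff _).1 ((QuotientGroup.mk_pow _ _ _).trans (pow_orderOf_eq_one _)))
  have hx1 : π x ≠ 1 := by
    rw [Ne, ← Perm.cycleType_eq_zero, hct]
    intro h
    have := congrArg Multiset.card h
    simp at this
    omega
  exact ⟨hord ▸ infinite_conj π hπy hπp hx1, x, hord, hct⟩
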